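/- Let k ≥ 1 and n ≥ k + 2, and let e_n denote the last standard basis vector of ℝ^n. Let s_1, …, s_l be (k−1)-simplices contained in the hyperplane {x ∈ ℝ^n : ⟨x, e_n⟩ = 0}, and let F_i = f_i e_n with f_i ∈ ℝ be forces perpendicular to this hyperplane. If the finite system of forces F = Σ_{i=1}^{l} F_i μ_{s_i} is in equilibrium, then F = B + F^h, where B is a finite sum of k-beams with symmetric coefficient matrices structural for their simplices, and F^h = Σ_{i=1}^{l} F_i^h μ_{s_i} is a finite system of forces in equilibrium whose simplices s_i and whose force vectors F_i^h all lie in the hyperplane {x : ⟨x, e_n⟩ = 0}. -/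

import Mathlib

open MeasureTheory Matrix
open scoped RealInnerProductSpace

noncomputable section

abbrev Euc (n : ℕ) : Type := EuclideanSpace ℝ (Fin n)

/-- The action of an `n × n` real matrix on a vector of `ℝⁿ`. -/
def matVec {n : ℕ} (A : Matrix (Fin n) (Fin n) ℝ) (v : Euc n) : Euc n :=
  Matrix.toEuclideanLin A v

/-- `wedge v w = v wᵀ − w vᵀ`. -/
def wedge {n : ℕ} (v w : Euc n) : Matrix (Fin n) (Fin n) ℝ :=
  Matrix.of fun p q => v p * w q - w p * v q

/-- `rankOne v = v vᵀ`. -/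
def rankOne {n : ℕ} (v : Euc n) : Matrix (Fin n) (Fin n) ℝ :=
  Matrix.of fun p q => v p * v q

/-- The (closed) simplex spanned by a family of points: the convex hull of its range. -/
def simplexSet {n : ℕ} {ι : Type*} (b : ι → Euc n) : Set (Euc n) :=
  convexHull ℝ (Set.range b)

/-- The barycenter of a finite family of points. -/
def bary {n : ℕ} {ι : Type*} [Fintype ι] (b : ι → Euc n) : Euc n :=
  (Fintype.card ι : ℝ)⁻¹ • ∑ i, b i

/-- The vertices of the face of the simplex `b` opposite to the vertex `i`. -/
def face {n K : ℕ} (b : Fin K → Euc n) (i : Fin K) : {j : Fin K // j ≠ i} → Euc n :=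
  fun j => b j.1

/-- The vector measure `Σᵢ Fᵢ μ_{sᵢ}` of a finite system of forces, as an
`ℝⁿ`-valued set function; here `d` is the Hausdorff dimension of the simplices. -/
def sys {n l : ℕ} {ι : Type*} (d : ℝ) (s : Fin l → ι → Euc n) (F : Fin l → Euc n) :
    Set (Euc n) → Euc n :=
  fun S => ∑ i, (μH[d] (S ∩ simplexSet (s i))).toReal • F i

/-- A finite system of forces is in equilibrium: zero net force and zero net torque. -/
def equil {n l : ℕ} {ι : Type*} [Fintype ι] (d : ℝ) (s : Fin l → ι → Euc n)
    (F : Fin l → Euc n) : Prop :=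
  (∑ i, (μH[d] (simplexSet (s i))).toReal • F i = 0) ∧
  (∑ i, (μH[d] (simplexSet (s i))).toReal • wedge (bary (s i)) (F i) = 0)

/-- `v` is the outward unit conormal of the face of `b` opposite vertex `i`. -/
def IsConormal {n K : ℕ} (b : Fin K → Euc n) (i : Fin K) (v : Euc n) : Prop :=
  v ∈ vectorSpan ℝ (Set.range b) ∧ ‖v‖ = 1 ∧
    (∀ w ∈ vectorSpan ℝ (Set.range (face b i)), ⟪v, w⟫ = 0) ∧
    ⟪v, b i - bary (face b i)⟫ < 0

open scoped Classical in
/-- The outward unit conormal of the face of `b` opposite vertex `i`. -/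
def conormal {n K : ℕ} (b : Fin K → Euc n) (i : Fin K) : Euc n :=
  if h : ∃ v, IsConormal b i v then h.choose else 0

/-- A matrix is structural for a simplex if its range is contained in the
direction space of the simplex. -/
def Structural {n : ℕ} {ι : Type*} (A : Matrix (Fin n) (Fin n) ℝ) (b : ι → Euc n) : Prop :=
  ∀ v, matVec A v ∈ vectorSpan ℝ (Set.range b)

/-- The beam `A ⊗ Beam(τ)` of a simplex `τ` with `K` vertices (so of dimension `K − 1`,
with faces of dimension `K − 2`), as an `ℝⁿ`-valued set function. -/
def beam {n K : ℕ} (A : Matrix (Fin n) (Fin n) ℝ) (b : Fin K → Euc n) :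
    Set (Euc n) → Euc n :=
  fun S => ∑ i, (μH[(K : ℝ) - 2] (S ∩ simplexSet (face b i))).toReal • matVec A (conormal b i)

/-- `G` is a finite sum of beams over simplices with `K` vertices, with symmetric
coefficient matrices that are structural for their simplices. -/
def IsBeamSum {n : ℕ} (K : ℕ) (G : Set (Euc n) → Euc n) : Prop :=
  ∃ (m : ℕ) (τ : Fin m → Fin K → Euc n) (A : Fin m → Matrix (Fin n) (Fin n) ℝ),
    (∀ j, AffineIndependent ℝ (τ j)) ∧ (∀ j, (A j).IsSymm) ∧
    (∀ j, Structural (A j) (τ j)) ∧ (G = fun S => ∑ j, beam (A j) (τ j) S)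

/-!
The proof is by duality. A linear functional `φ` that vanishes on all beams assigns to every
`(k - 1)`-simplex `S` a vector `Φ S` representing `φ` on the forces spread uniformly over `S`. For
an edge `p - q` of a `k`-simplex, the beam with coefficient matrix `(p - q)(p - q)ᵀ` loads only
the two facets opposite `p` and `q`, with opposite total forces along `p - q`. Hence `Φ` satisfies
the equations of an infinitesimally rigid bar framework, one bar for each such pair of facets.
Every solution has the form `Φ S = M (∑ x ∈ S, x) + t` with `M` skew, so on simplicial forces `φ`
is the virtual work of an infinitesimal rigid motion, which vanishes on systems in equilibrium.
Since no functional separates such a system from the span of the beams, it is itself a sum of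
beams, whatever the directions of its forces.

For fixed remaining vertices, the rigidity equations determine the motion of the last vertex up to
a skew `M` and a translation. These `M` agree for all choices of the remaining vertices because a
trilinear form that is symmetric in two arguments and skew in two vanishes.
-/

theorem image_erase_eq_image {α β : Type*} [DecidableEq α] {f : α → β} {s : Finset α} {a b : α}
    (hb : b ∈ s) (hba : b ≠ a) (hf : f a = f b) :
    f '' (s.erase a : Set α) = f '' (s : Set α) := by
  refine (Set.image_mono (by exact_mod_cast s.erase_subset a)).antisymm ?_
  rintro _ ⟨x, hx, rfl⟩
  obtain rfl | hxa := eq_or_ne x a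
  · exact ⟨b, Finset.mem_coe.2 (Finset.mem_erase.2 ⟨hba, hb⟩), hf.symm⟩
  · exact ⟨x, Finset.mem_coe.2 (Finset.mem_erase.2 ⟨hxa, hx⟩), rfl⟩

section VertexSet

variable {𝕜 V : Type*} [DivisionRing 𝕜] [AddCommGroup V] [Module 𝕜 V] {m : ℕ} {S T : Finset V}
  {p q : V}

/-- `S` is the vertex set of an `(m - 1)`-simplex: it consists of `m` affinely independent points.
Indexing simplices by their vertex sets makes two simplices with the same vertices equal. -/
structure IsVertexSet (𝕜 : Type*) {V : Type*} [DivisionRing 𝕜] [AddCommGroup V] [Module 𝕜 V]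
    (m : ℕ) (S : Finset V) : Prop where
  card_eq : S.card = m
  affineIndependent : AffineIndependent 𝕜 ((↑) : S → V)

namespace IsVertexSet

theorem image_univ {ι : Type*} [Fintype ι] [DecidableEq V] {b : ι → V}
    (hb : AffineIndependent 𝕜 b) (hcard : Fintype.card ι = m) :
    IsVertexSet 𝕜 m (Finset.univ.image b) := by
  refine ⟨(Finset.card_image_of_injective _ hb.injective).trans hcard, ?_⟩
  have h := hb.range
  rw [← Set.image_univ, ← Finset.coe_univ, ← Finset.coe_image] at h
  exact h

theorem finrank_vectorSpan (hS : IsVertexSet 𝕜 (m + 1) S) :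
    Module.finrank 𝕜 (vectorSpan 𝕜 (S : Set V)) = m := by
  have h := hS.affineIndependent.finrank_vectorSpan (n := m) (by simpa using hS.card_eq)
  have hrange : Set.range ((↑) : S → V) = S := Subtype.range_coe
  rwa [hrange] at h

theorem notMem_affineSpan_erase [DecidableEq V] (hS : IsVertexSet 𝕜 m S) (hp : p ∈ S) :
    p ∉ affineSpan 𝕜 (S.erase p : Set V) := by
  have h := hS.affineIndependent.notMem_affineSpan_sdiff ⟨p, hp⟩ Set.univ
  have himage : ((↑) : S → V) '' (Set.univ \ {⟨p, hp⟩}) = (S.erase p : Set V) := by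
    ext x
    simp [and_comm]
  rwa [himage] at h

theorem erase [DecidableEq V] (hS : IsVertexSet 𝕜 (m + 1) S) (hp : p ∈ S) :
    IsVertexSet 𝕜 m (S.erase p) :=
  ⟨by rw [Finset.card_erase_of_mem hp, hS.card_eq, Nat.add_sub_cancel],
    AffineIndependent.mono (s := (S.erase p : Set V)) (t := (S : Set V)) hS.affineIndependent
      (by exact_mod_cast S.erase_subset p)⟩

theorem insert_of_notMem [DecidableEq V] (hS : IsVertexSet 𝕜 m S)
    (hp : p ∉ affineSpan 𝕜 (S : Set V)) : IsVertexSet 𝕜 (m + 1) (insert p S) := by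
  have hpS : p ∉ S := fun h => hp (mem_affineSpan 𝕜 h)
  refine ⟨by rw [Finset.card_insert_of_notMem hpS, hS.card_eq], ?_⟩
  let p' : (insert p S : Finset V) := ⟨p, Finset.mem_insert_self p S⟩
  have mem_of_ne : ∀ x ≠ p', (x : V) ∈ S := fun x hx =>
    (Finset.mem_insert.1 x.2).resolve_left fun h => hx (Subtype.ext h)
  refine .affineIndependent_of_notMem_span (i := p') ?_ fun h => hp (affineSpan_mono 𝕜 ?_ h)
  · let vertex : {x // x ≠ p'} ↪ S := ⟨fun x => ⟨x, mem_of_ne x x.2⟩, fun x y h =>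
      Subtype.ext (Subtype.ext (congrArg (fun z : S => (z : V)) h))⟩
    exact hS.affineIndependent.comp_embedding vertex
  · rintro _ ⟨x, hx, rfl⟩
    exact mem_of_ne x hx

theorem notMem_affineSpan_insert_comm [DecidableEq V] (hS : IsVertexSet 𝕜 m S)
    (hp : p ∉ affineSpan 𝕜 (S : Set V)) (hq : q ∉ affineSpan 𝕜 (insert p S : Finset V)) :
    p ∉ affineSpan 𝕜 (insert q S : Finset V) := by
  have hpS : p ∉ S := fun h => hp (mem_affineSpan 𝕜 h)
  have hqp : q ≠ p := fun h => hq (mem_affineSpan 𝕜 (by simp [h]))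
  have h := ((hS.insert_of_notMem hp).insert_of_notMem hq).notMem_affineSpan_erase
    (p := p) (by simp)
  rwa [Finset.erase_insert_of_ne hqp, Finset.erase_insert hpS] at h

theorem exists_mem_notMem_affineSpan (hT : IsVertexSet 𝕜 m T) (hST : S.card < m) :
    ∃ q ∈ T, q ∉ affineSpan 𝕜 (S : Set V) := by
  by_contra! h
  have := AffineIndependent.card_le_card_of_subset_affineSpan hT.affineIndependent h
  exact absurd hT.card_eq (by omega)

/-- Vertices outside `T` are traded one at a time for vertices of `T`. -/
theorem apply_eq_of_exchange [DecidableEq V] {X : Type*} (f : Finset V → X)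
    (hf : ∀ R, IsVertexSet 𝕜 m R → ∀ p ∉ affineSpan 𝕜 (R : Set V), ∀ q ∉ affineSpan 𝕜 (R : Set V),
      f (insert p R) = f (insert q R))
    (hS : IsVertexSet 𝕜 (m + 1) S) (hT : IsVertexSet 𝕜 (m + 1) T) : f S = f T := by
  induction hc : (S \ T).card generalizing S with
  | zero =>
    have hsub : S ⊆ T := by simpa using hc
    rw [Finset.eq_of_subset_of_card_le hsub (hT.card_eq.trans hS.card_eq.symm).le]
  | succ c ih =>
    obtain ⟨p, hp⟩ : (S \ T).Nonempty := Finset.card_pos.1 (by omega)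
    have hpS := (Finset.mem_sdiff.1 hp).1
    have hR := hS.erase hpS
    obtain ⟨q, hqT, hq⟩ := hT.exists_mem_notMem_affineSpan (S := S.erase p)
      (by rw [hR.card_eq]; omega)
    have hcard : (insert q (S.erase p) \ T).card = c := by
      rw [Finset.insert_sdiff_of_mem _ hqT, Finset.erase_sdiff_comm, Finset.card_erase_of_mem hp,
        hc, Nat.add_sub_cancel]
    rw [← ih (hR.insert_of_notMem hq) hcard, ← hf _ hR p (hS.notMem_affineSpan_erase hpS) q hq,
      Finset.insert_erase hpS]

end IsVertexSet

theorem affineSpan_ne_top_of_card_le_finrank [FiniteDimensional 𝕜 V]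
    (hS : S.card ≤ Module.finrank 𝕜 V) : affineSpan 𝕜 (S : Set V) ≠ ⊤ := by
  classical
  intro htop
  obtain rfl | hne := S.eq_empty_or_nonempty
  · simp at htop
  have hpos := hne.card_pos
  have hle := finrank_vectorSpan_image_finset_le 𝕜 id S (n := S.card - 1) (by omega)
  rw [Finset.coe_image, Set.image_id, ← direction_affineSpan, htop, AffineSubspace.direction_top,
    finrank_top] at hle
  omega

end VertexSet

section Rigidity

variable {E : Type*} [NormedAddCommGroup E] [InnerProductSpace ℝ E]

theorem inner_map_eq_neg_of_inner_map_self_eq_zero {M : E →ₗ[ℝ] E} (hM : ∀ x, ⟪M x, x⟫ = 0)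
    (x y : E) : ⟪M x, y⟫ = -⟪M y, x⟫ := by
  have h := hM (x + y)
  simp only [map_add, inner_add_left, inner_add_right, hM] at h
  linarith

variable [FiniteDimensional ℝ E] [MeasurableSpace E] [BorelSpace E]

theorem ae_notMem_affineSubspace {A : AffineSubspace ℝ E} (hA : A ≠ ⊤) :
    ∀ᵐ x : E, x ∉ A :=
  measure_eq_zero_iff_ae_notMem.1 (Measure.addHaar_affineSubspace volume A hA)

theorem IsVertexSet.ae_notMem_affineSpan {m : ℕ} {R : Finset E} (hR : IsVertexSet ℝ m R)
    (hm : m ≤ Module.finrank ℝ E) : ∀ᵐ x : E, x ∉ affineSpan ℝ (R : Set E) :=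
  ae_notMem_affineSubspace (affineSpan_ne_top_of_card_le_finrank (hR.card_eq.trans_le hm))

theorem exists_sub_eq_of_ae {P : E → Prop} (hP : ∀ᵐ x, P x) (y : E) :
    ∃ a b, P a ∧ P b ∧ a - b = y := by
  obtain ⟨a, ha, hb⟩ :=
    (hP.and ((measurePreserving_sub_right volume y).quasiMeasurePreserving.ae hP)).exists
  exact ⟨a, a - y, ha, hb, sub_sub_cancel a y⟩

variable {u : E → E} {D : Set E}

/-- Subtracting the length constraints towards `q` and `q + e i` leaves an equation for the
`e i`-coordinate of the velocity that is affine in the position. -/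
theorem ae_eq_affine_of_inner_sub_eq_zero (hD : ∀ᵐ q, q ∈ D)
    (hu : ∀ q ∈ D, ∀ᵐ p, ⟪u p - u q, p - q⟫ = 0) :
    ∃ (M : E →ₗ[ℝ] E) (t : E), ∀ᵐ p, u p = M p + t := by
  let e := stdOrthonormalBasis ℝ E
  obtain ⟨q, hq, hqe⟩ : ∃ q, q ∈ D ∧ ∀ i, q + e i ∈ D :=
    (hD.and (ae_all_iff.2 fun i =>
      (measurePreserving_add_right volume (e i)).quasiMeasurePreserving.ae hD)).exists
  let a i : E := u q - u (q + e i)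
  let c i : ℝ := ⟪u (q + e i), e i⟫ - ⟪a i, q⟫
  refine ⟨∑ i, (innerₗ E (a i)).smulRight (e i), ∑ i, c i • e i, ?_⟩
  filter_upwards [hu q hq, ae_all_iff.2 fun i => hu _ (hqe i)] with p hpq hpe
  have hcoord : ∀ i, ⟪e i, u p⟫ = ⟪a i, p⟫ + c i := fun i => by
    have h := hpe i
    simp only [inner_sub_left, inner_sub_right, inner_add_right, a, c] at hpq h ⊢
    rw [real_inner_comm]
    linarith
  calc u p = ∑ i, ⟪e i, u p⟫ • e i := (e.sum_repr' _).symm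
    _ = _ := by simp [hcoord, add_smul, Finset.sum_add_distrib]

theorem exists_skew_eq_of_inner_sub_eq_zero (hD : ∀ᵐ q, q ∈ D)
    (hu : ∀ q ∈ D, ∀ᵐ p, ⟪u p - u q, p - q⟫ = 0) :
    ∃ (M : E →ₗ[ℝ] E) (t : E), (∀ x, ⟪M x, x⟫ = 0) ∧ ∀ p ∈ D, u p = M p + t := by
  obtain ⟨M, t, hMt⟩ := ae_eq_affine_of_inner_sub_eq_zero hD hu
  have hskew : ∀ x, ⟪M x, x⟫ = 0 := by
    obtain ⟨q, hqD, hq⟩ := (hD.and hMt).exists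
    have hae : (fun p => ⟪M (p - q), p - q⟫) =ᵐ[volume] fun _ => 0 := by
      filter_upwards [hMt, hu q hqD] with p hp hpq
      rwa [hp, hq, add_sub_add_right_eq_sub, ← map_sub] at hpq
    have hM : Continuous M := M.continuous_of_finiteDimensional
    have heq := (Continuous.ae_eq_iff_eq volume (by fun_prop) continuous_const).1 hae
    exact fun x => by simpa using congrFun heq (x + q)
  refine ⟨M, t, hskew, fun p hp => ?_⟩
  have hdefect : ∀ᵐ q, ⟪u p - (M p + t), q - p⟫ = 0 := by
    filter_upwards [hMt, hu p hp] with q hq hqp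
    have h := hskew (q - p)
    rw [hq] at hqp
    have hsplit : M q + t - u p = M (q - p) - (u p - (M p + t)) := by
      rw [map_sub]
      abel
    rw [hsplit, inner_sub_left, h] at hqp
    linarith
  obtain ⟨a, b, ha, hb, hab⟩ := exists_sub_eq_of_ae hdefect (u p - (M p + t))
  rw [← sub_eq_zero, ← inner_self_eq_zero (𝕜 := ℝ)]
  calc ⟪u p - (M p + t), u p - (M p + t)⟫ = ⟪u p - (M p + t), (a - p) - (b - p)⟫ := by
        rw [sub_sub_sub_cancel_right, hab]
    _ = 0 := by rw [inner_sub_right, ha, hb, sub_zero]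

/-- The trilinear form `⟪(M p - M p') (q - q'), r - r'⟫` is symmetric in its first two arguments and
skew in its last two, so it vanishes. -/
theorem map_eq_of_ae_reciprocal {M : E → E →ₗ[ℝ] E} {t : E → E} (hD : ∀ᵐ q, q ∈ D)
    (hskew : ∀ p ∈ D, ∀ x, ⟪M p x, x⟫ = 0)
    (hrec : ∀ p ∈ D, ∀ᵐ q, M p q + t p = M q p + t q) {p p' : E} (hp : p ∈ D) (hp' : p' ∈ D) :
    M p = M p' := by
  have symm : ∀ {a a' b b'}, (M a b + t a = M b a + t b) → (M a b' + t a = M b' a + t b') →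
      (M a' b + t a' = M b a' + t b) → (M a' b' + t a' = M b' a' + t b') →
      (M a - M a') (b - b') = (M b - M b') (a - a') := fun h₁ h₂ h₃ h₄ => by
    simp only [LinearMap.sub_apply, map_sub]
    linear_combination (norm := module) h₁ - h₂ - h₃ + h₄
  have skew : ∀ {a a'}, a ∈ D → a' ∈ D → ∀ x y,
      ⟪(M a - M a') x, y⟫ = -⟪(M a - M a') y, x⟫ := fun ha ha' =>
    inner_map_eq_neg_of_inner_map_self_eq_zero fun x => by
      rw [LinearMap.sub_apply, inner_sub_left, hskew _ ha, hskew _ ha', sub_zero]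
  have hgood := hD.and ((hrec p hp).and (hrec p' hp'))
  refine LinearMap.ext fun y => ext_inner_right ℝ fun z => ?_
  obtain ⟨q, q', ⟨hq, hpq, hpq₂⟩, ⟨hq', hpq', hpq₂'⟩, rfl⟩ := exists_sub_eq_of_ae hgood y
  obtain ⟨r, r', ⟨⟨hr, hpr, hpr₂⟩, hqr, hqr₂⟩, ⟨⟨hr', hpr', hpr₂'⟩, hqr', hqr₂'⟩, rfl⟩ :=
    exists_sub_eq_of_ae (hgood.and ((hrec q hq).and (hrec q' hq'))) z
  have hPQ := symm hpq hpq' hpq₂ hpq₂'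
  have hPR := symm hpr hpr' hpr₂ hpr₂'
  have hQR := symm hqr hqr' hqr₂ hqr₂'
  have hcycle : ⟪(M p - M p') (q - q'), r - r'⟫ = -⟪(M p - M p') (q - q'), r - r'⟫ := by
    calc ⟪(M p - M p') (q - q'), r - r'⟫ = ⟪(M q - M q') (p - p'), r - r'⟫ := by rw [hPQ]
      _ = -⟪(M r - M r') (q - q'), p - p'⟫ := by rw [skew hq hq', hQR]
      _ = ⟪(M p - M p') (r - r'), q - q'⟫ := by rw [skew hr hr', neg_neg, hPR]
      _ = -⟪(M p - M p') (q - q'), r - r'⟫ := skew hp hp' _ _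
  rw [← sub_eq_zero, ← inner_sub_left, ← LinearMap.sub_apply]
  linarith

end Rigidity

section SimplexRigidity

variable {E : Type*} [NormedAddCommGroup E] [InnerProductSpace ℝ E] [FiniteDimensional ℝ E]
  [DecidableEq E] {k : ℕ} {Φ : Finset E → E}

variable (Φ k) in
/-- The rigidity equations for a field of velocities `Φ` on the `(k - 1)`-simplices of `E`: on the
two faces of a `k`-simplex opposite `p` and `q`, the velocities agree along the edge `p - q`. -/
def IsRigidField : Prop :=
  ∀ T, IsVertexSet ℝ (k + 1) T → ∀ p ∈ T, ∀ q ∈ T, ⟪Φ (T.erase p) - Φ (T.erase q), p - q⟫ = 0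

variable [MeasurableSpace E] [BorelSpace E]

theorem IsRigidField.exists_skew_insert (hΦ : IsRigidField (k + 1) Φ)
    (hk : k + 1 ≤ Module.finrank ℝ E) {R : Finset E} (hR : IsVertexSet ℝ k R) :
    ∃ (M : E →ₗ[ℝ] E) (t : E), (∀ x, ⟪M x, x⟫ = 0) ∧
      ∀ p ∉ affineSpan ℝ (R : Set E), Φ (insert p R) = M p + t := by
  refine exists_skew_eq_of_inner_sub_eq_zero (D := {p | p ∉ affineSpan ℝ (R : Set E)})
    (hR.ae_notMem_affineSpan (by omega)) fun q (hq : q ∉ affineSpan ℝ (R : Set E)) => ?_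
  have hqR := hR.insert_of_notMem hq
  filter_upwards [hqR.ae_notMem_affineSpan hk] with p hp
  have hqp : q ∈ insert p (insert q R) := by simp
  have hne : p ≠ q := fun h => hp (h ▸ mem_affineSpan ℝ (by simp))
  have h := hΦ _ (hqR.insert_of_notMem hp) q hqp p (Finset.mem_insert_self p _)
  have hpn : p ∉ insert q R := fun h => hp (mem_affineSpan ℝ h)
  have hqn : q ∉ R := fun h => hq (mem_affineSpan ℝ h)
  rw [Finset.erase_insert hpn, Finset.erase_insert_of_ne hne, Finset.erase_insert hqn] at h
  rw [← neg_sub q p, inner_neg_right, h, neg_zero]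

theorem IsRigidField.exists_skew (hΦ : IsRigidField (k + 1) Φ)
    (hk : k + 1 ≤ Module.finrank ℝ E) :
    ∃ M : E →ₗ[ℝ] E, (∀ x, ⟪M x, x⟫ = 0) ∧ ∀ R, IsVertexSet ℝ k R → ∃ t,
      ∀ p ∉ affineSpan ℝ (R : Set E), Φ (insert p R) = M p + t := by
  choose! M t hskew hM using fun R (hR : IsVertexSet ℝ k R) => hΦ.exists_skew_insert hk hR
  have hM_eq : ∀ {R R'}, IsVertexSet ℝ k R → IsVertexSet ℝ k R' → M R = M R' := by
    intro R R' hR hR'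
    obtain _ | k := k
    · rw [Finset.card_eq_zero.1 hR.card_eq, Finset.card_eq_zero.1 hR'.card_eq]
    refine IsVertexSet.apply_eq_of_exchange M (fun Q hQ p hp p' hp' => ?_) hR hR'
    refine map_eq_of_ae_reciprocal (M := fun p => M (insert p Q)) (t := fun p => t (insert p Q))
      (D := {p | p ∉ affineSpan ℝ (Q : Set E)}) (hQ.ae_notMem_affineSpan (by omega))
      (fun p hp => hskew _ (hQ.insert_of_notMem hp)) (fun p hp => ?_) hp hp'
    have hpQ := hQ.insert_of_notMem hp
    filter_upwards [hQ.ae_notMem_affineSpan (by omega), hpQ.ae_notMem_affineSpan (by omega)]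
      with q hq hqp
    have hp' := hQ.notMem_affineSpan_insert_comm hp hqp
    rw [← hM _ hpQ q hqp, ← hM _ (hQ.insert_of_notMem hq) p hp', Finset.insert_comm]
  by_cases hex : ∃ R : Finset E, IsVertexSet ℝ k R
  · obtain ⟨R₀, hR₀⟩ := hex
    exact ⟨M R₀, hskew R₀ hR₀, fun R hR => ⟨t R, hM_eq hR hR₀ ▸ hM R hR⟩⟩
  · exact ⟨0, by simp, fun R hR => absurd ⟨R, hR⟩ hex⟩

theorem IsRigidField.exists_skew_sum (hΦ : IsRigidField (k + 1) Φ)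
    (hk : k + 1 ≤ Module.finrank ℝ E) :
    ∃ (M : E →ₗ[ℝ] E) (t : E), (∀ x, ⟪M x, x⟫ = 0) ∧
      ∀ S, IsVertexSet ℝ (k + 1) S → Φ S = M (∑ x ∈ S, x) + t := by
  obtain ⟨M, hskew, hM⟩ := hΦ.exists_skew hk
  by_cases hex : ∃ S : Finset E, IsVertexSet ℝ (k + 1) S
  swap
  · exact ⟨M, 0, hskew, fun S hS => absurd ⟨S, hS⟩ hex⟩
  obtain ⟨S₀, hS₀⟩ := hex
  refine ⟨M, Φ S₀ - M (∑ x ∈ S₀, x), hskew, fun S hS => ?_⟩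
  rw [← sub_eq_iff_eq_add']
  refine IsVertexSet.apply_eq_of_exchange (fun S => Φ S - M (∑ x ∈ S, x))
    (fun R hR p hp q hq => ?_) hS hS₀
  obtain ⟨t, ht⟩ := hM R hR
  have hpR : p ∉ R := fun h => hp (mem_affineSpan ℝ h)
  have hqR : q ∉ R := fun h => hq (mem_affineSpan ℝ h)
  rw [ht p hp, ht q hq, Finset.sum_insert hpR, Finset.sum_insert hqR, map_add, map_add]
  abel

end SimplexRigidity

theorem sub_mem_vectorSpan_of_mem_convexHull {V : Type*} [AddCommGroup V] [Module ℝ V] {S : Set V}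
    {p x : V} (hp : p ∈ S) (hx : x ∈ convexHull ℝ S) : x - p ∈ vectorSpan ℝ S := by
  rw [← direction_affineSpan]
  exact AffineSubspace.vsub_mem_direction (convexHull_subset_affineSpan S hx) (mem_affineSpan ℝ hp)

section FacetMeasure

open Module

variable {E : Type*} [NormedAddCommGroup E] [InnerProductSpace ℝ E]

/-- The isometric parametrization `y ↦ p + y` of the affine subspace through `p` with direction
`W`. -/
def translateIncl (W : Submodule ℝ E) (p : E) : W →ᵃⁱ[ℝ] E :=
  (AffineIsometryEquiv.constVAdd ℝ E p).toAffineIsometry.comp W.subtypeₗᵢ.toAffineIsometry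

theorem translateIncl_apply (W : Submodule ℝ E) (p : E) (y : W) :
    translateIncl W p y = p + y := rfl

theorem linear_translateIncl (W : Submodule ℝ E) (p : E) :
    (translateIncl W p).toAffineMap.linear = W.subtype :=
  LinearMap.ext fun _ => rfl

theorem translateIncl_image_preimage {W : Submodule ℝ E} {p : E} {X : Set E}
    (hX : ∀ x ∈ X, x - p ∈ W) : translateIncl W p '' (translateIncl W p ⁻¹' X) = X :=
  Set.image_preimage_eq_iff.2 fun x hx => ⟨⟨x - p, hX x hx⟩, add_sub_cancel p x⟩

section Projection

variable [FiniteDimensional ℝ E]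

theorem normDet_orthogonal_comp_subtype {d : E} (hd : ‖d‖ = 1) (W : Submodule ℝ E) :
    (((ℝ ∙ d)ᗮ.starProjection : E →ₗ[ℝ] E) ∘ₗ W.subtype).normDet ^ 2 =
      1 - ⟪W.starProjection d, d⟫ := by
  set f := ((ℝ ∙ d)ᗮ.starProjection : E →ₗ[ℝ] E) ∘ₗ W.subtype
  have hproj : ∀ x, (ℝ ∙ d)ᗮ.starProjection x = x - ⟪d, x⟫ • d := fun x => by
    rw [Submodule.starProjection_orthogonal_val, Submodule.starProjection_unit_singleton ℝ hd]
  have hadj : f.adjoint ∘ₗ f = LinearMap.transvection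
      (-(innerₗ W (W.orthogonalProjectionOnto d))) (W.orthogonalProjectionOnto d) := by
    refine LinearMap.ext fun x => ext_inner_right ℝ fun y => ?_
    have hW : ∀ z : W, ⟪W.orthogonalProjectionOnto d, z⟫ = ⟪d, (z : E)⟫ :=
      fun z => W.inner_orthogonalProjectionOnto_eq_of_mem_right z d
    calc ⟪(f.adjoint ∘ₗ f) x, y⟫ = ⟪(x : E) - ⟪d, x⟫ • d, (y : E) - ⟪d, y⟫ • d⟫ := by
          rw [LinearMap.comp_apply, LinearMap.adjoint_inner_left, ← hproj, ← hproj]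
          rfl
      _ = ⟪(x : E), y⟫ - ⟪d, (x : E)⟫ * ⟪d, (y : E)⟫ := by
          rw [inner_sub_left, inner_sub_right, inner_sub_right, real_inner_smul_left,
            real_inner_smul_left, real_inner_smul_right, real_inner_smul_right,
            real_inner_self_eq_norm_sq, hd, real_inner_comm d (x : E)]
          ring
      _ = _ := by
          rw [LinearMap.transvection.apply, inner_add_left, real_inner_smul_left, hW,
            LinearMap.neg_apply, innerₗ_apply_apply, hW, neg_mul, ← sub_eq_add_neg,
            Submodule.coe_inner]
  have h := f.normDet_sq
  rw [hadj, LinearMap.transvection.det] at h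
  simpa [sub_eq_add_neg] using h

theorem starProjection_eq_sub_of_unit_normal {V W : Submodule ℝ E} (hWV : W ≤ V)
    (hrank : finrank ℝ V = finrank ℝ W + 1) {v d : E} (hv : v ∈ V) (hv1 : ‖v‖ = 1)
    (hvW : ∀ w ∈ W, ⟪v, w⟫ = 0) (hd : d ∈ V) : W.starProjection d = d - ⟪v, d⟫ • v := by
  have hW : W = V ⊓ (ℝ ∙ v)ᗮ := by
    refine Submodule.eq_of_le_of_finrank_le
      (le_inf hWV fun w hw => Submodule.mem_orthogonal_singleton_iff_inner_right.2 (hvW w hw)) ?_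
    have hlt : V ⊓ (ℝ ∙ v)ᗮ < V := inf_le_left.lt_of_ne fun h => by
      have hvv := Submodule.mem_orthogonal_singleton_iff_inner_right.1 (h.ge hv).2
      simp [hv1] at hvv
    have := Submodule.finrank_lt_finrank_of_lt hlt
    omega
  refine (Submodule.eq_starProjection_of_mem_of_inner_eq_zero ?_ fun w hw => ?_)
  · rw [hW]
    refine ⟨V.sub_mem hd (V.smul_mem _ hv), Submodule.mem_orthogonal_singleton_iff_inner_right.2 ?_⟩
    rw [inner_sub_right, inner_smul_right, real_inner_self_eq_norm_sq, hv1]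
    ring
  · rw [sub_sub_cancel, inner_smul_left, hvW w hw, mul_zero]

end Projection

variable [MeasurableSpace E] [BorelSpace E]

theorem hausdorffMeasure_linearMap_image {F : Type*} [NormedAddCommGroup F] [InnerProductSpace ℝ F]
    [MeasurableSpace F] [BorelSpace F] (g : E →ₗ[ℝ] F) (W : Submodule ℝ E) [FiniteDimensional ℝ W]
    {p : E} {X : Set E} (hX : ∀ x ∈ X, x - p ∈ W) :
    μH[finrank ℝ W] (g '' X) =
      ENNReal.ofReal (g ∘ₗ W.subtype).normDet * μH[finrank ℝ W] X := by
  have himage : g '' X = (fun y => g p + y) '' ((g ∘ₗ W.subtype) '' (translateIncl W p ⁻¹' X)) := by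
    conv_lhs => rw [← translateIncl_image_preimage hX]
    simp only [Set.image_image, translateIncl_apply, map_add, LinearMap.comp_apply,
      Submodule.subtype_apply]
  have hdim : (0 : ℝ) ≤ finrank ℝ W := Nat.cast_nonneg _
  rw [himage, (isometry_add_left (g p)).hausdorffMeasure_image (.inl hdim),
    LinearMap.hausdorffMeasure_image,
    ← (translateIncl W p).isometry.hausdorffMeasure_image (.inl hdim),
    translateIncl_image_preimage hX]

variable [FiniteDimensional ℝ E]

theorem hausdorffMeasure_convexHull_pos {S : Set E} (hS : S.Nonempty) :
    0 < μH[finrank ℝ (vectorSpan ℝ S)] (convexHull ℝ S) := by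
  obtain ⟨p, hp⟩ := hS
  let ι := translateIncl (vectorSpan ℝ S) p
  let Y := ι ⁻¹' S
  have hY : ι '' Y = S := translateIncl_image_preimage fun x hx => vsub_mem_vectorSpan ℝ hx hp
  have hspan : vectorSpan ℝ Y = ⊤ := by
    have h := ι.toAffineMap.map_vectorSpan (s := Y)
    rw [linear_translateIncl] at h
    refine Submodule.map_injective_of_injective (vectorSpan ℝ S).injective_subtype ?_
    rw [h, Submodule.map_subtype_top]
    exact congrArg (vectorSpan ℝ) hY
  have hinterior : (interior (convexHull ℝ Y)).Nonempty := by
    rwa [interior_convexHull_nonempty_iff_affineSpan_eq_top,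
      AffineSubspace.affineSpan_eq_top_iff_vectorSpan_eq_top_of_nonempty]
    exact ⟨0, by simpa [Y, ι, translateIncl_apply] using hp⟩
  have himage : ι '' convexHull ℝ Y = convexHull ℝ S :=
    (ι.toAffineMap.image_convexHull Y).trans (congrArg (convexHull ℝ) hY)
  rw [← himage, ι.isometry.hausdorffMeasure_image (.inl (Nat.cast_nonneg _))]
  exact Measure.measure_pos_of_nonempty_interior _ hinterior

theorem hausdorffMeasure_convexHull_lt_top {S : Set E} (hS : Bornology.IsBounded S) :
    μH[finrank ℝ (vectorSpan ℝ S)] (convexHull ℝ S) < ⊤ := by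
  obtain rfl | ⟨p, hp⟩ := S.eq_empty_or_nonempty
  · simp
  rw [← translateIncl_image_preimage fun x => sub_mem_vectorSpan_of_mem_convexHull hp,
    (translateIncl _ p).isometry.hausdorffMeasure_image (.inl (Nat.cast_nonneg _))]
  refine Bornology.IsBounded.measure_lt_top ?_
  exact (translateIncl _ p).antilipschitz.isBounded_preimage (isBounded_convexHull.2 hS)

theorem IsVertexSet.measureReal_convexHull_pos {k : ℕ} {S : Finset E}
    (hS : IsVertexSet ℝ (k + 1) S) : 0 < (μH[(k : ℝ)]).real (convexHull ℝ (S : Set E)) := by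
  have hne : (S : Set E).Nonempty :=
    Finset.coe_nonempty.2 (Finset.card_pos.1 (by rw [hS.card_eq]; omega))
  have hpos := hausdorffMeasure_convexHull_pos hne
  have hlt := hausdorffMeasure_convexHull_lt_top S.finite_toSet.isBounded
  rw [hS.finrank_vectorSpan] at hpos hlt
  exact ENNReal.toReal_pos hpos.ne' hlt.ne

variable [DecidableEq E] {k : ℕ} {T : Finset E} {p d v : E}

theorem IsVertexSet.measureReal_starProjection_facet (hT : IsVertexSet ℝ (k + 2) T) (hp : p ∈ T)
    (hv : v ∈ vectorSpan ℝ (T : Set E)) (hv1 : ‖v‖ = 1)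
    (hvp : ∀ w ∈ vectorSpan ℝ (T.erase p : Set E), ⟪v, w⟫ = 0)
    (hd : d ∈ vectorSpan ℝ (T : Set E)) (hd1 : ‖d‖ = 1) :
    (μH[(k : ℝ)]).real ((ℝ ∙ d)ᗮ.starProjection '' convexHull ℝ (T.erase p : Set E)) =
      |⟪v, d⟫| * (μH[(k : ℝ)]).real (convexHull ℝ (T.erase p : Set E)) := by
  have hR := hT.erase hp
  set W := vectorSpan ℝ (T.erase p : Set E)
  obtain ⟨x₀, hx₀⟩ : (T.erase p).Nonempty := Finset.card_pos.1 (by rw [hR.card_eq]; omega)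
  have hrank : finrank ℝ (vectorSpan ℝ (T : Set E)) = finrank ℝ W + 1 := by
    rw [hT.finrank_vectorSpan, hR.finrank_vectorSpan]
  have hnormDet : (((ℝ ∙ d)ᗮ.starProjection : E →ₗ[ℝ] E) ∘ₗ W.subtype).normDet = |⟪v, d⟫| := by
    rw [← abs_of_nonneg (LinearMap.normDet_nonneg _), ← sq_eq_sq_iff_abs_eq_abs,
      normDet_orthogonal_comp_subtype hd1, starProjection_eq_sub_of_unit_normal
        (vectorSpan_mono ℝ (by exact_mod_cast T.erase_subset p)) hrank hv hv1 hvp hd,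
      inner_sub_left, inner_smul_left, real_inner_self_eq_norm_sq, hd1]
    simp [sq]
  have h := hausdorffMeasure_linearMap_image ((ℝ ∙ d)ᗮ.starProjection : E →ₗ[ℝ] E) W
    fun x => sub_mem_vectorSpan_of_mem_convexHull hx₀
  rw [hR.finrank_vectorSpan, hnormDet] at h
  rw [measureReal_def, measureReal_def, ← ENNReal.toReal_ofReal (abs_nonneg ⟪v, d⟫),
    ← ENNReal.toReal_mul, ← h]
  rfl

/-- The facets opposite `p` and `q` have the same orthogonal projection along `p - q`. -/
theorem IsVertexSet.measureReal_facet_mul_abs_inner {q w : E} (hT : IsVertexSet ℝ (k + 2) T)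
    (hp : p ∈ T) (hq : q ∈ T) (hpq : p ≠ q)
    (hv : v ∈ vectorSpan ℝ (T : Set E)) (hv1 : ‖v‖ = 1)
    (hvp : ∀ x ∈ vectorSpan ℝ (T.erase p : Set E), ⟪v, x⟫ = 0)
    (hw : w ∈ vectorSpan ℝ (T : Set E)) (hw1 : ‖w‖ = 1)
    (hwq : ∀ x ∈ vectorSpan ℝ (T.erase q : Set E), ⟪w, x⟫ = 0) :
    (μH[(k : ℝ)]).real (convexHull ℝ (T.erase p : Set E)) * |⟪v, p - q⟫| =
      (μH[(k : ℝ)]).real (convexHull ℝ (T.erase q : Set E)) * |⟪w, p - q⟫| := by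
  have hpq0 : p - q ≠ 0 := sub_ne_zero.2 hpq
  let d := ‖p - q‖⁻¹ • (p - q)
  have hd1 : ‖d‖ = 1 := norm_smul_inv_norm hpq0
  have hd : d ∈ vectorSpan ℝ (T : Set E) :=
    Submodule.smul_mem _ _ (vsub_mem_vectorSpan ℝ hp hq)
  let π : E →ₗ[ℝ] E := (ℝ ∙ d)ᗮ.starProjection
  have hπ : π p = π q := by
    rw [← sub_eq_zero, ← map_sub]
    refine (Submodule.starProjection_apply_eq_zero_iff _).2
      (Submodule.le_orthogonal_orthogonal _ (Submodule.mem_span_singleton.2 ⟨‖p - q‖, ?_⟩))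
    exact smul_inv_smul₀ (norm_ne_zero_iff.2 hpq0) _
  have hproj : π '' convexHull ℝ (T.erase p : Set E) = π '' convexHull ℝ (T.erase q : Set E) := by
    rw [π.image_convexHull, π.image_convexHull, image_erase_eq_image hq hpq.symm hπ,
      image_erase_eq_image hp hpq hπ.symm]
  have hinner : ∀ x, |⟪x, p - q⟫| = ‖p - q‖ * |⟪x, d⟫| := fun x => by
    rw [← abs_of_nonneg (norm_nonneg (p - q)), ← abs_mul, ← inner_smul_right,
      smul_inv_smul₀ (norm_ne_zero_iff.2 hpq0)]
  have h : |⟪v, d⟫| * (μH[(k : ℝ)]).real (convexHull ℝ (T.erase p : Set E)) =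
      |⟪w, d⟫| * (μH[(k : ℝ)]).real (convexHull ℝ (T.erase q : Set E)) := by
    rw [← hT.measureReal_starProjection_facet hp hv hv1 hvp hd hd1,
      ← hT.measureReal_starProjection_facet hq hw hw1 hwq hd hd1]
    exact congrArg (μH[(k : ℝ)]).real hproj
  rw [hinner, hinner]
  linear_combination ‖p - q‖ * h

end FacetMeasure

theorem exists_unit_normal_inner_neg {E : Type*} [NormedAddCommGroup E] [InnerProductSpace ℝ E]
    {V W : Submodule ℝ E} [W.HasOrthogonalProjection] (hWV : W ≤ V) {x : E} (hxV : x ∈ V)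
    (hxW : x ∉ W) : ∃ v ∈ V, ‖v‖ = 1 ∧ (∀ w ∈ W, ⟪v, w⟫ = 0) ∧ ⟪v, x⟫ < 0 := by
  let y := -(x - W.starProjection x)
  have hyW : ∀ w ∈ W, ⟪y, w⟫ = 0 := fun w hw => by
    rw [inner_neg_left, W.starProjection_inner_eq_zero x w hw, neg_zero]
  have hprojW : W.starProjection x ∈ W := W.starProjection_apply_mem x
  have hyV : y ∈ V := V.neg_mem (V.sub_mem hxV (hWV hprojW))
  have hy : y ≠ 0 := fun h => hxW ((sub_eq_zero.1 (neg_eq_zero.1 h)).symm ▸ hprojW)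
  have hyx : ⟪y, x⟫ = -‖y‖ ^ 2 := by
    have hsplit : W.starProjection x - y = x := by rw [sub_neg_eq_add, add_sub_cancel]
    rw [← congrArg (⟪y, ·⟫) hsplit, inner_sub_right, hyW _ hprojW, real_inner_self_eq_norm_sq,
      zero_sub]
  refine ⟨‖y‖⁻¹ • y, V.smul_mem _ hyV, norm_smul_inv_norm hy,
    fun w hw => ?_, ?_⟩
  · rw [real_inner_smul_left, hyW w hw, mul_zero]
  · rw [real_inner_smul_left, hyx, mul_neg, neg_lt_zero]
    positivity

section Conormal

variable {n k : ℕ}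

theorem convexHull_image_univ {ι : Type*} [Fintype ι] [DecidableEq (Euc n)] (b : ι → Euc n) :
    convexHull ℝ (Finset.univ.image b : Set (Euc n)) = simplexSet b := by
  rw [simplexSet, Finset.coe_image, Finset.coe_univ, Set.image_univ]

theorem bary_mem_affineSpan {ι : Type*} [Fintype ι] [Nonempty ι] (b : ι → Euc n) :
    bary b ∈ affineSpan ℝ (Set.range b) := by
  have hcentroid : Finset.univ.centroid ℝ b = bary b := by
    rw [Finset.centroid_def, Finset.affineCombination_eq_linear_combination _ _ _
      (Finset.sum_centroidWeights_eq_one_of_nonempty ℝ _ Finset.univ_nonempty), bary,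
      Finset.smul_sum]
    rfl
  exact hcentroid ▸ centroid_mem_affineSpan_of_nonempty ℝ b Finset.univ_nonempty

theorem sum_image_univ_eq_smul_bary {ι : Type*} [Fintype ι] [Nonempty ι] [DecidableEq (Euc n)]
    {b : ι → Euc n} (hb : Function.Injective b) :
    ∑ x ∈ Finset.univ.image b, x = (Fintype.card ι : ℝ) • bary b := by
  rw [Finset.sum_image hb.injOn, bary, smul_inv_smul₀ (Nat.cast_ne_zero.2 Fintype.card_ne_zero)]

theorem range_face {K : ℕ} {b : Fin K → Euc n} (hb : Function.Injective b) (i : Fin K) :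
    Set.range (face b i) = Set.range b \ {b i} := by
  ext x
  constructor
  · rintro ⟨⟨j, hj⟩, rfl⟩
    exact ⟨⟨j, rfl⟩, fun h => hj (hb h)⟩
  · rintro ⟨⟨j, rfl⟩, hj⟩
    exact ⟨⟨j, fun h => hj (congrArg b h)⟩, rfl⟩

variable {b : Fin (k + 2) → Euc n} {i j : Fin (k + 2)}

theorem isConormal_conormal (hb : AffineIndependent ℝ b) (i : Fin (k + 2)) :
    IsConormal b i (conormal b i) := by
  suffices h : ∃ v, IsConormal b i v by
    rw [conormal, dif_pos h]
    exact h.choose_spec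
  obtain ⟨j, hj⟩ := exists_ne i
  have : Nonempty {j : Fin (k + 2) // j ≠ i} := ⟨⟨j, hj⟩⟩
  have hbary := bary_mem_affineSpan (face b i)
  have hface : Set.range (face b i) ⊆ Set.range b := Set.range_comp_subset_range _ b
  refine exists_unit_normal_inner_neg (vectorSpan_mono ℝ hface) ?_ fun h => ?_
  · rw [← direction_affineSpan]
    exact AffineSubspace.vsub_mem_direction (mem_affineSpan ℝ ⟨i, rfl⟩)
      (affineSpan_mono ℝ hface hbary)
  · rw [← direction_affineSpan] at h
    have hmem := AffineSubspace.vadd_mem_of_mem_direction h hbary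
    rw [vadd_eq_add, sub_add_cancel] at hmem
    refine hb.notMem_affineSpan_sdiff i Set.univ (affineSpan_mono ℝ ?_ hmem)
    rintro _ ⟨l, rfl⟩
    exact ⟨l, ⟨trivial, l.2⟩, rfl⟩

theorem inner_conormal_sub_neg (hb : AffineIndependent ℝ b) (hij : i ≠ j) :
    ⟪conormal b i, b i - b j⟫ < 0 := by
  obtain ⟨-, -, hface, hneg⟩ := isConormal_conormal hb i
  have : Nonempty {l : Fin (k + 2) // l ≠ i} := ⟨⟨j, hij.symm⟩⟩
  have hj : bary (face b i) - b j ∈ vectorSpan ℝ (Set.range (face b i)) := by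
    rw [← direction_affineSpan]
    exact AffineSubspace.vsub_mem_direction (bary_mem_affineSpan _)
      (mem_affineSpan ℝ ⟨⟨j, hij.symm⟩, rfl⟩)
  rwa [← sub_add_sub_cancel _ (bary (face b i)), inner_add_right, hface _ hj, add_zero]

theorem inner_conormal_sub_eq_zero (hb : AffineIndependent ℝ b) {l : Fin (k + 2)} (hi : i ≠ l)
    (hj : j ≠ l) : ⟪conormal b l, b i - b j⟫ = 0 :=
  (isConormal_conormal hb l).2.2.1 _
    (vsub_mem_vectorSpan ℝ (Set.mem_range_self (⟨i, hi⟩ : {m // m ≠ l}))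
      (Set.mem_range_self (⟨j, hj⟩ : {m // m ≠ l})))

theorem measureReal_simplexSet_pos {ι : Type*} [Fintype ι] {b : ι → Euc n}
    (hb : AffineIndependent ℝ b) (hcard : Fintype.card ι = k + 1) :
    0 < (μH[(k : ℝ)]).real (simplexSet b) := by
  classical
  rw [← convexHull_image_univ]
  exact (IsVertexSet.image_univ hb hcard).measureReal_convexHull_pos

theorem measureReal_face_pos (hb : AffineIndependent ℝ b) (i : Fin (k + 2)) :
    0 < (μH[(k : ℝ)]).real (simplexSet (face b i)) :=
  measureReal_simplexSet_pos (hb.comp_embedding (.subtype _)) (by simp)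

theorem measureReal_face_mul_inner_conormal (hb : AffineIndependent ℝ b) (hij : i ≠ j) :
    (μH[(k : ℝ)]).real (simplexSet (face b i)) * ⟪conormal b i, b i - b j⟫ =
      -((μH[(k : ℝ)]).real (simplexSet (face b j)) * ⟪conormal b j, b i - b j⟫) := by
  classical
  have hT : IsVertexSet ℝ (k + 2) (Finset.univ.image b) :=
    .image_univ hb (Fintype.card_fin _)
  have hrange : ((Finset.univ.image b : Finset (Euc n)) : Set (Euc n)) = Set.range b := by simp
  have hface : ∀ l, Set.range (face b l) = ((Finset.univ.image b).erase (b l) : Set (Euc n)) :=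
    fun l => by rw [range_face hb.injective, Finset.coe_erase, hrange]
  obtain ⟨hi, hi1, hio, -⟩ := isConormal_conormal hb i
  obtain ⟨hj, hj1, hjo, -⟩ := isConormal_conormal hb j
  rw [← hrange] at hi hj
  rw [hface] at hio hjo
  have hmem : ∀ l, b l ∈ Finset.univ.image b := fun l =>
    Finset.mem_image_of_mem b (Finset.mem_univ l)
  have h := hT.measureReal_facet_mul_abs_inner (hmem i) (hmem j) (hb.injective.ne hij)
    hi hi1 hio hj hj1 hjo
  have hneg := inner_conormal_sub_neg hb hij
  have hpos : 0 < ⟪conormal b j, b i - b j⟫ := by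
    rw [← neg_sub, inner_neg_right]
    exact neg_pos.2 (inner_conormal_sub_neg hb hij.symm)
  rw [← hface, ← hface, abs_of_neg hneg, abs_of_pos hpos] at h
  rw [simplexSet, simplexSet, ← h, mul_neg, neg_neg]

end Conormal

section Beams

variable {n k : ℕ}

theorem matVec_rankOne (v x : Euc n) : matVec (rankOne v) x = ⟪v, x⟫ • v := by
  have h : rankOne v = Matrix.vecMulVec v v := rfl
  ext i
  rw [matVec, h, Matrix.toLpLin_apply, Matrix.vecMulVec_mulVec,
    EuclideanSpace.inner_eq_star_dotProduct]
  simp [dotProduct_comm, mul_comm]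

theorem isSymm_rankOne (v : Euc n) : (rankOne v).IsSymm :=
  Matrix.IsSymm.ext fun i j => mul_comm (v j) (v i)

theorem structural_rankOne_sub {ι : Type*} (b : ι → Euc n) (i j : ι) :
    Structural (rankOne (b i - b j)) b := fun x => by
  rw [matVec_rankOne]
  exact Submodule.smul_mem _ _ (vsub_mem_vectorSpan ℝ ⟨i, rfl⟩ ⟨j, rfl⟩)

/-- The force with total `v` spread uniformly over `σ` with respect to the `d`-dimensional
Hausdorff measure, as a vector-valued set function depending linearly on `v`. -/
def uniformForce (d : ℝ) (σ : Set (Euc n)) : Euc n →ₗ[ℝ] Set (Euc n) → Euc n :=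
  LinearMap.pi fun X => ((μH[d]).real (X ∩ σ) / (μH[d]).real σ) • LinearMap.id

theorem uniformForce_smul_apply {d : ℝ} {σ : Set (Euc n)} (hσ : (μH[d]).real σ ≠ 0) (v : Euc n)
    (X : Set (Euc n)) :
    uniformForce d σ ((μH[d]).real σ • v) X = (μH[d]).real (X ∩ σ) • v := by
  rw [uniformForce, LinearMap.pi_apply, LinearMap.smul_apply, LinearMap.id_apply, smul_smul,
    div_mul_cancel₀ _ hσ]

theorem sys_eq_sum_uniformForce {l : ℕ} {s : Fin l → Fin (k + 1) → Euc n}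
    (hs : ∀ i, AffineIndependent ℝ (s i)) (F : Fin l → Euc n) :
    sys (k : ℝ) s F = ∑ i, uniformForce k (simplexSet (s i))
      ((μH[(k : ℝ)]).real (simplexSet (s i)) • F i) := by
  ext1 X
  rw [Finset.sum_apply]
  exact Finset.sum_congr rfl fun i _ =>
    (uniformForce_smul_apply (measureReal_simplexSet_pos (hs i) (by simp)).ne' _ X).symm

variable {b : Fin (k + 2) → Euc n} {i j : Fin (k + 2)}

theorem beam_eq_sum_uniformForce (hb : AffineIndependent ℝ b) (A : Matrix (Fin n) (Fin n) ℝ) :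
    beam A b = ∑ i, uniformForce k (simplexSet (face b i))
      ((μH[(k : ℝ)]).real (simplexSet (face b i)) • matVec A (conormal b i)) := by
  have hdim : ((k + 2 : ℕ) : ℝ) - 2 = k := by push_cast; ring
  ext1 X
  rw [Finset.sum_apply, beam, hdim]
  exact Finset.sum_congr rfl fun i _ =>
    (uniformForce_smul_apply (measureReal_face_pos hb i).ne' _ X).symm

/-- The only facets that are not parallel to `b i - b j` are those opposite `b i` and `b j`, and
the forces on them balance. -/
theorem beam_rankOne_sub (hb : AffineIndependent ℝ b) (hij : i ≠ j) :
    beam (rankOne (b i - b j)) b =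
      ((μH[(k : ℝ)]).real (simplexSet (face b i)) * ⟪conormal b i, b i - b j⟫) •
        (uniformForce k (simplexSet (face b i)) (b i - b j) -
          uniformForce k (simplexSet (face b j)) (b i - b j)) := by
  rw [beam_eq_sum_uniformForce hb, Finset.sum_eq_add i j hij]
  · simp only [matVec_rankOne, smul_smul, map_smul, real_inner_comm _ (b i - b j)]
    rw [measureReal_face_mul_inner_conormal hb hij, smul_sub, neg_smul, neg_smul, sub_neg_eq_add]
  · rintro l - ⟨hli, hlj⟩
    rw [matVec_rankOne, real_inner_comm, inner_conormal_sub_eq_zero hb hli.symm hlj.symm, zero_smul,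
      smul_zero, map_zero]
  · simp
  · simp

theorem beam_smul {K : ℕ} (c : ℝ) (A : Matrix (Fin n) (Fin n) ℝ) (b : Fin K → Euc n) :
    beam (c • A) b = c • beam A b := by
  ext1 X
  simp only [beam, matVec, Pi.smul_apply, Finset.smul_sum, map_smul, LinearMap.smul_apply,
    smul_comm c]

/-- The beams of simplices with `K` vertices that may occur in an `IsBeamSum`. -/
def structuralBeams (n K : ℕ) : Set (Set (Euc n) → Euc n) :=
  {G | ∃ (τ : Fin K → Euc n) (A : Matrix (Fin n) (Fin n) ℝ),
    AffineIndependent ℝ τ ∧ A.IsSymm ∧ Structural A τ ∧ beam A τ = G}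

theorem isBeamSum_of_mem_span {K : ℕ} {G : Set (Euc n) → Euc n}
    (hG : G ∈ Submodule.span ℝ (structuralBeams n K)) : IsBeamSum K G := by
  obtain ⟨m, c, g, hg⟩ := Submodule.mem_span_set'.1 hG
  choose τ A hτ hsymm hstruct hbeam using fun j => (g j).2
  refine ⟨m, τ, fun j => c j • A j, hτ, fun j => (hsymm j).smul (c j), fun j v => ?_, ?_⟩
  · rw [matVec, map_smul, LinearMap.smul_apply]
    exact Submodule.smul_mem _ _ (hstruct j v)
  · ext1 X
    simp only [← hg, Finset.sum_apply, beam_smul, hbeam]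

end Beams

section Duality

variable {n k : ℕ} {φ : (Set (Euc n) → Euc n) →ₗ[ℝ] ℝ}

/-- The vector representing `φ` on the forces spread uniformly over the simplex with vertex set
`S`. -/
def dualField (k : ℕ) (φ : (Set (Euc n) → Euc n) →ₗ[ℝ] ℝ) (S : Finset (Euc n)) : Euc n :=
  (InnerProductSpace.toDual ℝ (Euc n)).symm
    (LinearMap.toContinuousLinearMap (φ ∘ₗ uniformForce k (convexHull ℝ (S : Set (Euc n)))))

theorem inner_dualField (k : ℕ) (φ : (Set (Euc n) → Euc n) →ₗ[ℝ] ℝ) (S : Finset (Euc n))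
    (v : Euc n) :
    ⟪dualField k φ S, v⟫ = φ (uniformForce k (convexHull ℝ (S : Set (Euc n))) v) :=
  InnerProductSpace.toDual_symm_apply

theorem isRigidField_dualField [DecidableEq (Euc n)]
    (hφ : Submodule.span ℝ (structuralBeams n (k + 2)) ≤ LinearMap.ker φ) :
    IsRigidField (k + 1) (dualField k φ) := by
  intro T hT p hp q hq
  obtain rfl | hpq := eq_or_ne p q
  · simp
  let e := T.equivFinOfCardEq hT.card_eq
  let b : Fin (k + 2) → Euc n := fun i => e.symm i
  have hb : AffineIndependent ℝ b := hT.affineIndependent.comp_embedding e.symm.toEmbedding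
  have hrange : Set.range b = T := by
    rw [Set.range_comp', e.symm.range_eq_univ, Set.image_univ]
    exact Subtype.range_coe
  have hface : ∀ i,
      simplexSet (face b i) = convexHull ℝ (T.erase (b i) : Set (Euc n)) := fun i => by
    rw [simplexSet, range_face hb.injective, hrange, Finset.coe_erase]
  obtain ⟨i, rfl⟩ : p ∈ Set.range b := hrange.ge hp
  obtain ⟨j, rfl⟩ : q ∈ Set.range b := hrange.ge hq
  have hij : i ≠ j := fun h => hpq (congrArg b h)
  have hzero : φ (beam (rankOne (b i - b j)) b) = 0 := hφ <| Submodule.subset_span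
    ⟨b, _, hb, isSymm_rankOne _, structural_rankOne_sub b i j, rfl⟩
  rw [beam_rankOne_sub hb hij, map_smul, map_sub, smul_eq_zero] at hzero
  rw [inner_sub_left, inner_dualField, inner_dualField, ← hface, ← hface]
  exact hzero.resolve_left
    (mul_ne_zero (measureReal_face_pos hb i).ne' (inner_conormal_sub_neg hb hij).ne)

end Duality

section Torque

variable {n : ℕ}

theorem trace_mul_wedge (N : Matrix (Fin n) (Fin n) ℝ) (v w : Euc n) :
    (N * wedge v w).trace = ⟪matVec N v, w⟫ - ⟪matVec N w, v⟫ := by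
  have hwedge : wedge v w = Matrix.vecMulVec v w - Matrix.vecMulVec w v := by
    ext p q
    simp only [wedge, Matrix.of_apply, Matrix.sub_apply, Matrix.vecMulVec_apply]
  have hinner : ∀ x y : Euc n, ⟪matVec N x, y⟫ = (N *ᵥ x) ⬝ᵥ y := fun x y => by
    rw [matVec, EuclideanSpace.inner_eq_star_dotProduct, star_trivial, dotProduct_comm]
    rfl
  rw [hwedge, Matrix.mul_sub, Matrix.trace_sub, Matrix.mul_vecMulVec, Matrix.mul_vecMulVec,
    Matrix.trace_vecMulVec, Matrix.trace_vecMulVec, hinner, hinner]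

theorem sum_inner_eq_zero_of_sum_wedge_eq_zero {ι : Type*} [Fintype ι] {M : Euc n →ₗ[ℝ] Euc n}
    (hM : ∀ x, ⟪M x, x⟫ = 0) {c : ι → ℝ} {x F : ι → Euc n}
    (h : ∑ i, c i • wedge (x i) (F i) = 0) : ∑ i, c i * ⟪M (x i), F i⟫ = 0 := by
  let N := Matrix.toEuclideanLin.symm M
  have hN : ∀ v w, (N * wedge v w).trace = 2 * ⟪M v, w⟫ := fun v w => by
    have hmatVec : ∀ u, matVec N u = M u := fun u =>
      congrArg (· u) (Matrix.toEuclideanLin.apply_symm_apply M)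
    rw [trace_mul_wedge, hmatVec, hmatVec, inner_map_eq_neg_of_inner_map_self_eq_zero hM w v]
    ring
  have htrace := congrArg (fun A => (N * A).trace) h
  simp only [Matrix.mul_sum, Matrix.trace_sum, Matrix.mul_smul, Matrix.trace_smul, hN, smul_eq_mul,
    mul_zero, Matrix.trace_zero, mul_left_comm _ (2 : ℝ), ← Finset.mul_sum] at htrace
  exact (mul_eq_zero.1 htrace).resolve_left two_ne_zero

end Torque

section Equilibrium

theorem equil_zero {n l : ℕ} {ι : Type*} [Fintype ι] (d : ℝ) (s : Fin l → ι → Euc n) :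
    equil d s 0 := by
  have hwedge : ∀ v : Euc n, wedge v 0 = 0 := fun v => by
    ext p q
    simp [wedge]
  constructor
  · simp
  · simp [hwedge]

theorem sys_zero {n l : ℕ} {ι : Type*} (d : ℝ) (s : Fin l → ι → Euc n) : sys d s 0 = 0 := by
  ext1 X
  simp [sys]

variable {n k l : ℕ} {s : Fin l → Fin (k + 1) → Euc n} {F : Fin l → Euc n}
  {φ : (Set (Euc n) → Euc n) →ₗ[ℝ] ℝ}

/-- The assumption on `φ` says that it acts on simplicial forces as the virtual work of an
infinitesimal rigid motion. -/
theorem apply_sys_eq_zero_of_equil (hs : ∀ i, AffineIndependent ℝ (s i))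
    (hequil : equil (k : ℝ) s F) {M : Euc n →ₗ[ℝ] Euc n} (hM : ∀ x, ⟪M x, x⟫ = 0) {t : Euc n}
    (hφ : ∀ S, IsVertexSet ℝ (k + 1) S → dualField k φ S = M (∑ x ∈ S, x) + t) :
    φ (sys (k : ℝ) s F) = 0 := by
  classical
  let μ : Fin l → ℝ := fun i => (μH[(k : ℝ)]).real (simplexSet (s i))
  have hterm : ∀ i, φ (uniformForce k (simplexSet (s i)) (μ i • F i)) =
      (k + 1) * (μ i * ⟪M (bary (s i)), F i⟫) + ⟪t, μ i • F i⟫ := fun i => by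
    have hS : IsVertexSet ℝ (k + 1) (Finset.univ.image (s i)) :=
      .image_univ (hs i) (Fintype.card_fin _)
    rw [← convexHull_image_univ, ← inner_dualField, hφ _ hS,
      sum_image_univ_eq_smul_bary (hs i).injective, Fintype.card_fin, map_smul, inner_add_left,
      real_inner_smul_left, real_inner_smul_right, Nat.cast_add, Nat.cast_one]
  have htorque : ∑ i, μ i * ⟪M (bary (s i)), F i⟫ = 0 :=
    sum_inner_eq_zero_of_sum_wedge_eq_zero hM hequil.2
  have hforce : ∑ i, μ i • F i = 0 := hequil.1
  rw [sys_eq_sum_uniformForce hs, map_sum, Finset.sum_congr rfl fun i _ => hterm i,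
    Finset.sum_add_distrib, ← Finset.mul_sum, htorque, ← inner_sum, hforce, mul_zero,
    inner_zero_right, add_zero]

end Equilibrium

theorem statement5_general {k' n l : ℕ} (hn : k' + 1 ≤ n) (s : Fin l → Fin (k' + 1) → Euc n)
    (hs : ∀ i, AffineIndependent ℝ (s i)) (F : Fin l → Euc n) (hequil : equil (k' : ℝ) s F) :
    IsBeamSum (k' + 2) (sys (k' : ℝ) s F) := by
  classical
  refine isBeamSum_of_mem_span ?_
  by_contra hnot
  obtain ⟨φ, hφsys, hφbeams⟩ := Submodule.exists_le_ker_of_notMem hnot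
  obtain ⟨M, t, hM, hfield⟩ :=
    (isRigidField_dualField hφbeams).exists_skew_sum (by rwa [finrank_euclideanSpace_fin])
  exact hφsys (apply_sys_eq_zero_of_equil hs hequil hM hfield)

/-- (Proposition 1.)  With `k = k' + 1 ≥ 1` and `n ≥ k + 2`, a system
of vertical forces `fᵢ eₙ` on `(k−1)`-simplices lying in the hyperplane
`{x : ⟪x, eₙ⟫ = 0}` that is in equilibrium splits as `F = B + Fʰ`, with `B` a
finite sum of `k`-beams and `Fʰ` an equilibrium system on the same simplices whose
forces lie in the hyperplane. -/
theorem statement5 {k' n l : ℕ} (hn : k' + 3 ≤ n)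
    (en : Euc n) (hen : en = EuclideanSpace.single (⟨n - 1, by omega⟩ : Fin n) 1)
    (s : Fin l → Fin (k' + 1) → Euc n) (hs : ∀ i, AffineIndependent ℝ (s i))
    (hplane : ∀ i, simplexSet (s i) ⊆ {x : Euc n | ⟪x, en⟫ = 0})
    (f : Fin l → ℝ)
    (hequil : equil (k' : ℝ) s (fun i => f i • en)) :
    ∃ (B : Set (Euc n) → Euc n) (Fh : Fin l → Euc n),
      IsBeamSum (k' + 2) B ∧
      (∀ i, ⟪Fh i, en⟫ = 0) ∧
      equil (k' : ℝ) s Fh ∧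
      sys (k' : ℝ) s (fun i => f i • en) = fun S => B S + sys (k' : ℝ) s Fh S :=
  ⟨_, 0, statement5_general (by omega) s hs _ hequil, by simp, equil_zero _ s, by simp [sys_zero]⟩

end
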